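/- Let S be a set of 2k points in the plane in general position such that exactly one point of S lies in the interior of the convex hull of S. Then S has a non-crossing perfect matching with the piercing property, unless S has the exceptional order type: k = 3, and for every point P of S other than the unique interior point Q, each of the two open half-planes bounded by the line through Q and P contains exactly 2 points of S. -/

import Mathlib

open scoped Classical

/-- Points in the plane. -/
abbrev Pt : Type := ℝ × ℝ

/-- A finite planar point set is in *general position* if no three of its
points are collinear. -/
def GeneralPosition (S : Finset Pt) : Prop :=
  ∀ p ∈ S, ∀ q ∈ S, ∀ r ∈ S, p ≠ q → p ≠ r → q ≠ r →
    ¬ Collinear ℝ ({p, q, r} : Set Pt)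

/-- The closed straight-line segment spanned by an unordered pair of points. -/
noncomputable def seg : Sym2 Pt → Set Pt :=
  Sym2.lift ⟨fun a b => segment ℝ a b, fun a b => segment_symm ℝ a b⟩

/-- `M` is a non-crossing perfect matching of `S`: a partition of `S` into
unordered pairs (of distinct points) whose closed segments are pairwise disjoint. -/
def IsNCMatching (S : Finset Pt) (M : Finset (Sym2 Pt)) : Prop :=
  (∀ e ∈ M, ¬ e.IsDiag) ∧
  (∀ e ∈ M, ∀ p, p ∈ e → p ∈ S) ∧
  (∀ p ∈ S, ∃! e, e ∈ M ∧ p ∈ e) ∧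
  (∀ e ∈ M, ∀ f ∈ M, e ≠ f → Disjoint (seg e) (seg f))

/-- The number of non-crossing perfect matchings of `S`. -/
noncomputable def pm (S : Finset Pt) : ℕ :=
  Set.ncard {M : Finset (Sym2 Pt) | IsNCMatching S M}

/-- `S` is in convex position: no point of `S` lies in the convex hull of the
other points. -/
def ConvexPosition (S : Finset Pt) : Prop :=
  ∀ p ∈ S, p ∉ convexHull ℝ (↑(S.erase p) : Set Pt)

/-- The signed side of `X` with respect to the directed line from `Q` to `P`.
The two open half-planes bounded by the line through `Q` and `P` are
`{X | 0 < sideOf Q P X}` and `{X | sideOf Q P X < 0}`. -/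
def sideOf (Q P X : Pt) : ℝ :=
  (P.1 - Q.1) * (X.2 - Q.2) - (P.2 - Q.2) * (X.1 - Q.1)

/-- Segment `AB` pierces segment `CD`: the closed segments are disjoint, but the
affine line through `A` and `B` meets the closed segment `CD`. -/
def Pierces (A B C D : Pt) : Prop :=
  Disjoint (segment ℝ A B) (segment ℝ C D) ∧
  ((affineSpan ℝ ({A, B} : Set Pt) : Set Pt) ∩ segment ℝ C D).Nonempty

/-- The matching `M` of `S` has the *piercing property*: it contains pairs
`{A,B}` and `{C,D}` with `A` on the boundary of the convex hull of `S`
and `AB` piercing `CD`. -/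
def HasPiercing (S : Finset Pt) (M : Finset (Sym2 Pt)) : Prop :=
  ∃ A B C D : Pt, s(A, B) ∈ M ∧ s(C, D) ∈ M ∧
    A ∈ frontier (convexHull ℝ (S : Set Pt)) ∧ Pierces A B C D

/-- The exceptional order type with interior point `Q`: `Q` is the unique point
of `S` interior to the convex hull of `S`, and for every other point `P` of `S`
each open half-plane bounded by the line through `Q` and `P` contains exactly
two points of `S`. -/
def ExceptionalAt (S : Finset Pt) (Q : Pt) : Prop :=
  (↑S ∩ interior (convexHull ℝ (S : Set Pt))) = {Q} ∧
  ∀ P ∈ S, P ≠ Q →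
    (S.filter (fun X => 0 < sideOf Q P X)).card = 2 ∧
    (S.filter (fun X => sideOf Q P X < 0)).card = 2

/-- The exceptional order type of Figure 1. -/
def Exceptional (S : Finset Pt) : Prop :=
  ∃ Q ∈ S, ExceptionalAt S Q

/-!
For `P ∈ S` other than `Q`, the line `QP` splits the remaining points into a right and a left part.
As `Q` is interior, the ray from `P` leaves the hull of the remaining points, beyond `Q`, through
an edge `CD` joining the two parts. If the parts are odd, match `P` with `Q`, match `C` with `D`,
and match what is left on each side separately; then `PQ` pierces `CD`.

If the parts are even for every `P`, match `C` with `D` and remove them, which makes the parts odd,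
and repeat; this works as long as `Q` still lies on the inner side of some segment `AB` joining the
two parts. Sort the points `A` of the right part by their direction from `Q`. Passing from one to
the next moves a single point of the right part across the line `QA`, so by evenness an odd number
of points of the left part moves across as well, always in the same direction. Hence suitable
segments abound as soon as the right part has four points, and by double counting this happens for
some `P` unless `|S| = 6`.
-/

section Separation

lemma disjoint_convexHull_of_lt_of_le {E : Type*} [AddCommGroup E] [Module ℝ E]
    (f : E →ₗ[ℝ] ℝ) (a : ℝ) {T U : Set E} (hT : ∀ x ∈ T, f x < a) (hU : ∀ x ∈ U, a ≤ f x) :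
    Disjoint (convexHull ℝ T) (convexHull ℝ U) := by
  have hT' : convexHull ℝ T ⊆ {x | f x < a} := convexHull_min hT (convex_halfSpace_lt f.isLinear a)
  have hU' : convexHull ℝ U ⊆ {x | a ≤ f x} := convexHull_min hU (convex_halfSpace_ge f.isLinear a)
  exact Set.disjoint_left.2 fun x hxT hxU =>
    not_lt_of_ge (show a ≤ f x from hU' hxU) (show f x < a from hT' hxT)

lemma exists_dual_injOn {K M : Type*} [Field K] [Infinite K] [AddCommGroup M] [Module K M]
    {T : Set M} (hT : T.Finite) : ∃ f : Module.Dual K M, Set.InjOn f T := by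
  have : Finite T := hT
  obtain ⟨f, hf⟩ := Module.exists_dual_forall_apply_ne_zero (K := K)
    (fun p : {p : T × T // p.1 ≠ p.2} => (p.1.1 - p.1.2 : M))
    (fun p => sub_ne_zero.2 (Subtype.coe_ne_coe.2 p.2))
  refine ⟨f, fun x hx y hy hxy => ?_⟩
  by_contra hne
  exact hf ⟨(⟨x, hx⟩, ⟨y, hy⟩), by simpa using hne⟩ (by simp [hxy])

end Separation

section SideOf

lemma sideOf_self_left (Q P : Pt) : sideOf Q P Q = 0 := by simp [sideOf]

lemma sideOf_self_right (Q P : Pt) : sideOf Q P P = 0 := by simp only [sideOf]; ring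

lemma sideOf_swap_right (Q P X : Pt) : sideOf Q X P = -sideOf Q P X := by simp only [sideOf]; ring

lemma sideOf_swap_left (Q P X : Pt) : sideOf P Q X = -sideOf Q P X := by simp only [sideOf]; ring

lemma sideOf_rotate (A B C : Pt) : sideOf A B C = sideOf C A B := by simp only [sideOf]; ring

/-- The linear functional `w ↦ v × w`, the planar cross product with `v`. The functions
`sideOf Q P` are its affine translates, which gives access to the convexity and calculus of linear
functionals. -/
def crossWith (v : Pt) : Pt →L[ℝ] ℝ :=
  v.1 • ContinuousLinearMap.snd ℝ ℝ ℝ - v.2 • ContinuousLinearMap.fst ℝ ℝ ℝ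

lemma sideOf_eq_crossWith_sub (Q P X : Pt) :
    sideOf Q P X = crossWith (P - Q) X - crossWith (P - Q) Q := by
  simp only [sideOf, crossWith, sub_apply, smul_apply, ContinuousLinearMap.coe_fst',
    ContinuousLinearMap.coe_snd', Prod.fst_sub, Prod.snd_sub, smul_eq_mul]
  ring

lemma crossWith_ne_zero {v : Pt} (hv : v ≠ 0) : crossWith v ≠ 0 := by
  intro h
  have h₁ : crossWith v (0, 1) = 0 := by rw [h]; rfl
  have h₂ : crossWith v (1, 0) = 0 := by rw [h]; rfl
  exact hv (Prod.ext (by simpa [crossWith] using h₁) (by simpa [crossWith] using h₂))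

lemma disjoint_convexHull_of_sideOf {C D : Pt} {T U : Set Pt} (hT : ∀ X ∈ T, sideOf C D X < 0)
    (hU : ∀ X ∈ U, 0 ≤ sideOf C D X) : Disjoint (convexHull ℝ T) (convexHull ℝ U) := by
  simp only [sideOf_eq_crossWith_sub, sub_neg, sub_nonneg] at hT hU
  exact disjoint_convexHull_of_lt_of_le (crossWith (D - C)).toLinearMap _ hT hU

lemma exists_sideOf_neg_of_mem_interior {S : Set Pt} {P Q : Pt} (hPQ : P ≠ Q)
    (hQ : Q ∈ interior (convexHull ℝ S)) : ∃ X ∈ S, sideOf Q P X < 0 := by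
  by_contra! hS
  simp only [sideOf_eq_crossWith_sub, sub_nonneg] at hS
  have hull : convexHull ℝ S ⊆ {X | crossWith (P - Q) Q ≤ crossWith (P - Q) X} :=
    convexHull_min hS (convex_halfSpace_ge (crossWith (P - Q)).toLinearMap.isLinear _)
  have hmin : IsLocalMin (crossWith (P - Q)) Q :=
    Filter.mem_of_superset (mem_interior_iff_mem_nhds.1 hQ) hull
  exact crossWith_ne_zero (sub_ne_zero.2 hPQ)
    (hmin.hasFDerivAt_eq_zero (crossWith (P - Q)).hasFDerivAt)

lemma sq_add_sq_sub_pos {P Q : Pt} (hPQ : P ≠ Q) : 0 < (P.1 - Q.1) ^ 2 + (P.2 - Q.2) ^ 2 := by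
  rcases not_and_or.1 (mt Prod.ext_iff.2 hPQ) with h | h
  · have := sub_ne_zero.2 h
    positivity
  · have := sub_ne_zero.2 h
    positivity

lemma mem_affineSpan_pair_of_sideOf_eq_zero {A B X : Pt} (hAB : A ≠ B) (hX : sideOf A B X = 0) :
    X ∈ affineSpan ℝ ({A, B} : Set Pt) := by
  have hpos := sq_add_sq_sub_pos hAB.symm
  have key : AffineMap.lineMap A B (((X.1 - A.1) * (B.1 - A.1) + (X.2 - A.2) * (B.2 - A.2)) /
      ((B.1 - A.1) ^ 2 + (B.2 - A.2) ^ 2)) = X := by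
    simp only [sideOf] at hX
    ext
    · simp only [AffineMap.lineMap_apply, vsub_eq_sub, vadd_eq_add, Prod.fst_add, Prod.smul_fst,
        Prod.fst_sub, smul_eq_mul]
      field_simp
      linear_combination (B.2 - A.2) * hX
    · simp only [AffineMap.lineMap_apply, vsub_eq_sub, vadd_eq_add, Prod.snd_add, Prod.smul_snd,
        Prod.snd_sub, smul_eq_mul]
      field_simp
      linear_combination (A.1 - B.1) * hX
  exact key ▸ AffineMap.lineMap_mem_affineSpan_pair _ _ _

lemma exists_mem_segment_sideOf_eq_zero {Q P C D : Pt} (hC : sideOf Q P C < 0)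
    (hD : 0 < sideOf Q P D) : ∃ X ∈ segment ℝ C D, sideOf Q P X = 0 := by
  have hcont : Continuous (sideOf Q P) := by unfold sideOf; fun_prop
  exact (convex_segment C D).isPreconnected.intermediate_value (left_mem_segment ℝ C D)
    (right_mem_segment ℝ C D) hcont.continuousOn ⟨hC.le, hD.le⟩

lemma pierces_of_sideOf {P Q C D : Pt} (hPQ : P ≠ Q) (hC : sideOf Q P C < 0)
    (hD : 0 < sideOf Q P D) (hQ : sideOf C D Q < 0) (hP : sideOf C D P < 0) :
    Pierces P Q C D := by
  constructor
  · rw [← convexHull_pair, ← convexHull_pair]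
    exact disjoint_convexHull_of_sideOf (C := C) (D := D) (by simp [hP, hQ])
      (by simp [sideOf_self_left, sideOf_self_right])
  · obtain ⟨X, hXseg, hX⟩ := exists_mem_segment_sideOf_eq_zero hC hD
    exact ⟨X, Set.pair_comm Q P ▸ mem_affineSpan_pair_of_sideOf_eq_zero hPQ.symm hX, hXseg⟩

end SideOf

section GeneralPosition

variable {S T : Finset Pt} {A B X : Pt}

lemma GeneralPosition.mono (hT : GeneralPosition T) (hST : S ⊆ T) : GeneralPosition S :=
  fun p hp q hq r hr => hT p (hST hp) q (hST hq) r (hST hr)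

lemma GeneralPosition.sideOf_ne_zero (hS : GeneralPosition S) (hA : A ∈ S) (hB : B ∈ S)
    (hX : X ∈ S) (hAB : A ≠ B) (hXA : X ≠ A) (hXB : X ≠ B) : sideOf A B X ≠ 0 := fun h =>
  hS X hX A hA B hB hXA hXB hAB
    (collinear_insert_of_mem_affineSpan_pair (mem_affineSpan_pair_of_sideOf_eq_zero hAB h))

end GeneralPosition

section Matching

variable {T U : Finset Pt} {M N : Finset (Sym2 Pt)}

lemma seg_subset_convexHull {e : Sym2 Pt} (he : ∀ p ∈ e, p ∈ T) :
    seg e ⊆ convexHull ℝ (T : Set Pt) := by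
  induction e using Sym2.ind with
  | _ a b => exact segment_subset_convexHull (he a (by simp)) (he b (by simp))

lemma IsNCMatching.union (hM : IsNCMatching T M) (hN : IsNCMatching U N)
    (hd : Disjoint (convexHull ℝ (T : Set Pt)) (convexHull ℝ (U : Set Pt))) :
    IsNCMatching (T ∪ U) (M ∪ N) := by
  obtain ⟨hMdiag, hMsub, hMcover, hMdisj⟩ := hM
  obtain ⟨hNdiag, hNsub, hNcover, hNdisj⟩ := hN
  have hTU : ∀ p ∈ T, p ∉ U := fun p hpT hpU =>
    Set.disjoint_left.1 hd (subset_convexHull ℝ _ hpT) (subset_convexHull ℝ _ hpU)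
  refine ⟨?_, ?_, ?_, ?_⟩
  · grind
  · grind
  · intro p hp
    rcases Finset.mem_union.1 hp with hpT | hpU
    · obtain ⟨e, he, huniq⟩ := hMcover p hpT
      exact ⟨e, by grind, by grind⟩
    · obtain ⟨e, he, huniq⟩ := hNcover p hpU
      exact ⟨e, by grind, by grind⟩
  · intro e he f hf hne
    rcases Finset.mem_union.1 he with heM | heN <;> rcases Finset.mem_union.1 hf with hfM | hfN
    · exact hMdisj e heM f hfM hne
    · exact hd.mono (seg_subset_convexHull (hMsub e heM)) (seg_subset_convexHull (hNsub f hfN))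
    · exact hd.symm.mono (seg_subset_convexHull (hNsub e heN))
        (seg_subset_convexHull (hMsub f hfM))
    · exact hNdisj e heN f hfN hne

lemma isNCMatching_pair {a b : Pt} (hab : a ≠ b) : IsNCMatching {a, b} {s(a, b)} := by
  refine ⟨by simpa using hab, by simp, fun p hp => ⟨s(a, b), by simpa using hp, by simp⟩, ?_⟩
  simp

lemma IsNCMatching.union_pair {C D : Pt} (hM : IsNCMatching (T \ {C, D}) M) (hC : C ∈ T)
    (hD : D ∈ T) (hCD : C ≠ D) (hT : ∀ X ∈ T, X ≠ C → X ≠ D → sideOf C D X < 0) :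
    IsNCMatching T (M ∪ {s(C, D)}) := by
  have hTeq : T \ {C, D} ∪ {C, D} = T := Finset.sdiff_union_of_subset (by grind)
  rw [← hTeq]
  refine hM.union (isNCMatching_pair hCD) (disjoint_convexHull_of_sideOf (C := C) (D := D) ?_ ?_)
  · intro X hX
    simp only [Finset.mem_coe, Finset.mem_sdiff, Finset.mem_insert, Finset.mem_singleton,
      not_or] at hX
    exact hT X hX.1 hX.2.1 hX.2.2
  · simp [sideOf_self_left, sideOf_self_right]

-- Pair off the points consecutively along a direction in which no two of them agree.
lemma exists_isNCMatching_of_even_card (hT : Even T.card) : ∃ M, IsNCMatching T M := by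
  obtain ⟨f, hf⟩ := exists_dual_injOn (K := ℝ) T.finite_toSet
  obtain ⟨n, hn⟩ := hT
  induction n generalizing T with
  | zero =>
    obtain rfl : T = ∅ := by simpa using hn
    exact ⟨∅, by simp [IsNCMatching]⟩
  | succ n ih =>
    obtain ⟨p, hp, hpmax⟩ := T.exists_max_image f (Finset.card_pos.1 (by omega))
    have hcard := Finset.card_erase_of_mem hp
    obtain ⟨q, hq, hqmax⟩ := (T.erase p).exists_max_image f (Finset.card_pos.1 (by omega))
    have hcard' := Finset.card_erase_of_mem hq
    have hsub : (T.erase p).erase q ⊆ T := (Finset.erase_subset _ _).trans (Finset.erase_subset _ _)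
    obtain ⟨M, hM⟩ := ih (hf.mono (Finset.coe_subset.2 hsub)) (by omega)
    have hqT := Finset.mem_of_mem_erase hq
    have hTeq : (T.erase p).erase q ∪ {p, q} = T := by grind
    refine ⟨M ∪ {s(p, q)}, hTeq ▸ hM.union (isNCMatching_pair (Finset.ne_of_mem_erase hq).symm)
      (disjoint_convexHull_of_lt_of_le f (f q) ?_ ?_)⟩
    · intro X hX
      obtain ⟨hXq, hXp⟩ := Finset.mem_erase.1 (Finset.mem_coe.1 hX)
      exact (hqmax X hXp).lt_of_ne (hf.ne (Finset.mem_of_mem_erase hXp) hqT hXq)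
    · simp [hpmax q hqT]

end Matching

section Sides

/-- The points of `S` strictly to the right of the line directed from `Q` to `P`. -/
noncomputable def rightSide (Q P : Pt) (S : Finset Pt) : Finset Pt :=
  S.filter fun X => sideOf Q P X < 0

/-- The points of `S` strictly to the left of the line directed from `Q` to `P`. -/
noncomputable def leftSide (Q P : Pt) (S : Finset Pt) : Finset Pt :=
  S.filter fun X => 0 < sideOf Q P X

variable {S : Finset Pt} {Q P X : Pt}

lemma mem_rightSide : X ∈ rightSide Q P S ↔ X ∈ S ∧ sideOf Q P X < 0 := Finset.mem_filter

lemma mem_leftSide : X ∈ leftSide Q P S ↔ X ∈ S ∧ 0 < sideOf Q P X := Finset.mem_filter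

lemma ne_of_mem_rightSide (hX : X ∈ rightSide Q P S) : X ≠ Q := by
  rintro rfl
  exact (mem_rightSide.1 hX).2.ne (sideOf_self_left _ _)

lemma disjoint_rightSide_leftSide : Disjoint (rightSide Q P S) (leftSide Q P S) :=
  Finset.disjoint_left.2 fun _ hR hL => (mem_rightSide.1 hR).2.asymm (mem_leftSide.1 hL).2

lemma disjoint_rightSide_union_leftSide_pair :
    Disjoint (rightSide Q P S ∪ leftSide Q P S) {P, Q} := by
  simp [mem_rightSide, mem_leftSide, sideOf_self_left, sideOf_self_right]

lemma GeneralPosition.rightSide_union_leftSide_union_pair (hS : GeneralPosition S) (hQ : Q ∈ S)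
    (hP : P ∈ S) (hPQ : P ≠ Q) : rightSide Q P S ∪ leftSide Q P S ∪ {P, Q} = S := by
  ext X
  have hside : X ∈ S → X ≠ P → X ≠ Q → sideOf Q P X < 0 ∨ 0 < sideOf Q P X :=
    fun hX hXP hXQ => lt_or_gt_of_ne (hS.sideOf_ne_zero hQ hP hX hPQ.symm hXQ hXP)
  simp only [Finset.mem_union, Finset.mem_insert, Finset.mem_singleton, mem_rightSide,
    mem_leftSide]
  grind

lemma GeneralPosition.card_rightSide_add_card_leftSide (hS : GeneralPosition S) (hQ : Q ∈ S)
    (hP : P ∈ S) (hPQ : P ≠ Q) :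
    (rightSide Q P S).card + (leftSide Q P S).card + 2 = S.card := by
  rw [← Finset.card_union_of_disjoint disjoint_rightSide_leftSide, ← Finset.card_pair hPQ,
    ← Finset.card_union_of_disjoint disjoint_rightSide_union_leftSide_pair,
    hS.rightSide_union_leftSide_union_pair hQ hP hPQ]

lemma rightSide_sdiff_pair {C D : Pt} (hD : D ∈ leftSide Q P S) :
    rightSide Q P (S \ {C, D}) = (rightSide Q P S).erase C := by
  have hD' := (mem_leftSide.1 hD).2
  ext X
  simp only [mem_rightSide, Finset.mem_sdiff, Finset.mem_insert, Finset.mem_singleton,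
    Finset.mem_erase]
  grind

lemma leftSide_sdiff_pair {C D : Pt} (hC : C ∈ rightSide Q P S) :
    leftSide Q P (S \ {C, D}) = (leftSide Q P S).erase D := by
  have hC' := (mem_rightSide.1 hC).2
  ext X
  simp only [mem_leftSide, Finset.mem_sdiff, Finset.mem_insert, Finset.mem_singleton,
    Finset.mem_erase]
  grind

lemma mem_sdiff_pair_of_mem_sides {C D : Pt} (hQ : Q ∈ S) (hP : P ∈ S) (hC : C ∈ rightSide Q P S)
    (hD : D ∈ leftSide Q P S) : P ∈ S \ {C, D} ∧ Q ∈ S \ {C, D} := by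
  have hC' := (mem_rightSide.1 hC).2
  have hD' := (mem_leftSide.1 hD).2
  have := sideOf_self_left Q P
  have := sideOf_self_right Q P
  grind

lemma sum_card_rightSide_eq_sum_card_leftSide (Q : Pt) (S : Finset Pt) :
    ∑ P ∈ S, (rightSide Q P S).card = ∑ P ∈ S, (leftSide Q P S).card := by
  have h := Finset.sum_card_bipartiteAbove_eq_sum_card_bipartiteBelow (s := S) (t := S)
    (fun P X => sideOf Q P X < 0)
  have hbelow : ∀ P X, sideOf Q P X < 0 ↔ 0 < sideOf Q X P := fun P X => by
    rw [sideOf_swap_right, neg_neg_iff_pos]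
  exact h.trans (Finset.sum_congr rfl fun X _ =>
    congrArg Finset.card (Finset.filter_congr fun P _ => hbelow P X))

lemma exists_card_leftSide_le_card_rightSide (hX : X ∈ S) (hXQ : X ≠ Q) :
    ∃ P ∈ S, P ≠ Q ∧ (leftSide Q P S).card ≤ (rightSide Q P S).card := by
  by_contra! hlt
  refine (Finset.sum_lt_sum (fun P hP => ?_) ⟨X, hX, hlt X hX hXQ⟩).ne
    (sum_card_rightSide_eq_sum_card_leftSide Q S)
  rcases eq_or_ne P Q with rfl | hPQ
  · simp [rightSide, leftSide, sideOf]
  · exact (hlt P hP hPQ).le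

lemma GeneralPosition.exists_isNCMatching_mem (hS : GeneralPosition S) (hQ : Q ∈ S) (hP : P ∈ S)
    (hPQ : P ≠ Q) (hright : Even (rightSide Q P S).card) (hleft : Even (leftSide Q P S).card) :
    ∃ M, IsNCMatching S M ∧ s(P, Q) ∈ M := by
  obtain ⟨MR, hMR⟩ := exists_isNCMatching_of_even_card hright
  obtain ⟨ML, hML⟩ := exists_isNCMatching_of_even_card hleft
  have hdisjL : Disjoint (convexHull ℝ (({P, Q} : Finset Pt) : Set Pt))
      (convexHull ℝ (leftSide Q P S : Set Pt)) := by
    refine (disjoint_convexHull_of_sideOf (C := P) (D := Q) ?_ ?_).symm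
    · intro X hX
      rw [sideOf_swap_left]
      exact neg_neg_of_pos (mem_leftSide.1 hX).2
    · simp [sideOf_self_left, sideOf_self_right]
  have hdisjR : Disjoint (convexHull ℝ (rightSide Q P S : Set Pt))
      (convexHull ℝ (({P, Q} ∪ leftSide Q P S : Finset Pt) : Set Pt)) := by
    refine disjoint_convexHull_of_sideOf (fun X hX => (mem_rightSide.1 hX).2) fun X hX => ?_
    simp only [Finset.coe_union, Finset.coe_insert, Finset.coe_singleton, Set.mem_union,
      Set.mem_insert_iff, Set.mem_singleton_iff, Finset.mem_coe] at hX
    rcases hX with (rfl | rfl) | hX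
    · exact (sideOf_self_right _ _).ge
    · exact (sideOf_self_left _ _).ge
    · exact (mem_leftSide.1 hX).2.le
  refine ⟨MR ∪ ({s(P, Q)} ∪ ML), ?_, by simp⟩
  rw [← hS.rightSide_union_leftSide_union_pair hQ hP hPQ, Finset.union_assoc,
    Finset.union_comm (leftSide Q P S)]
  exact hMR.union ((isNCMatching_pair hPQ).union hML hdisjL) hdisjR

end Sides

section Bridge

variable {S L R : Finset Pt} {Q P A B : Pt}

-- The line `AB` crosses the line `QP` at `Q + t (P - Q)`, where
-- `t = sideOf A B Q / (sideOf Q P B - sideOf Q P A)`; the identity compares two such positions.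
lemma sideOf_mul_sub_sideOf (Q P A B C D : Pt) :
    sideOf C D Q * (sideOf Q P B - sideOf Q P A) =
      sideOf Q P B * sideOf C D A - sideOf Q P A * sideOf C D B +
        sideOf A B Q * (sideOf Q P D - sideOf Q P C) := by
  simp only [sideOf]
  ring

-- Among all segments from `R` to `L`, take the one crossing the line `QP` farthest from `P`.
lemma exists_bridge_of_sideOf (hRne : R.Nonempty) (hLne : L.Nonempty)
    (hR : ∀ X ∈ R, sideOf Q P X < 0) (hL : ∀ X ∈ L, 0 < sideOf Q P X) :
    ∃ C ∈ R, ∃ D ∈ L, ∀ X ∈ R ∪ L, sideOf C D X ≤ 0 := by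
  obtain ⟨⟨C, D⟩, hCD, hmin⟩ := Finset.exists_min_image (R ×ˢ L)
    (fun Z => sideOf Z.1 Z.2 Q / (sideOf Q P Z.2 - sideOf Q P Z.1)) (hRne.product hLne)
  obtain ⟨hC, hD⟩ := Finset.mem_product.1 hCD
  have hgap : ∀ X ∈ R, ∀ Y ∈ L, 0 < sideOf Q P Y - sideOf Q P X := fun X hX Y hY => by
    linarith [hR X hX, hL Y hY]
  have hbelow : ∀ X ∈ R, ∀ Y ∈ L,
      sideOf Q P Y * sideOf C D X ≤ sideOf Q P X * sideOf C D Y := by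
    intro X hX Y hY
    have hle := hmin (X, Y) (Finset.mk_mem_product hX hY)
    rw [div_le_div_iff₀ (hgap C hC D hD) (hgap X hX Y hY), sideOf_mul_sub_sideOf Q P X Y C D]
      at hle
    linarith
  refine ⟨C, hC, D, hD, fun X hX => ?_⟩
  rcases Finset.mem_union.1 hX with hXR | hXL
  · have := hbelow X hXR D hD
    rw [sideOf_self_right, mul_zero] at this
    exact nonpos_of_mul_nonpos_right this (hL D hD)
  · have := hbelow C hC X hXL
    rw [sideOf_self_left, mul_zero] at this
    exact nonpos_of_mul_nonneg_right this (hR C hC)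

lemma GeneralPosition.exists_bridge (hS : GeneralPosition S) (hQ : Q ∈ S) (hP : P ∈ S)
    (hPQ : P ≠ Q) (hA : A ∈ rightSide Q P S) (hB : B ∈ leftSide Q P S) (hAB : sideOf A B Q < 0) :
    ∃ C ∈ rightSide Q P S, ∃ D ∈ leftSide Q P S, ∀ X ∈ S, X ≠ C → X ≠ D → sideOf C D X < 0 := by
  obtain ⟨C, hC, D, hD, hbelow⟩ := exists_bridge_of_sideOf ⟨A, hA⟩ ⟨B, hB⟩
    (fun X hX => (mem_rightSide.1 hX).2) (fun X hX => (mem_leftSide.1 hX).2)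
  have hCneg := (mem_rightSide.1 hC).2
  have hDpos := (mem_leftSide.1 hD).2
  have hAneg := (mem_rightSide.1 hA).2
  have hBpos := (mem_leftSide.1 hB).2
  have hQneg : sideOf C D Q < 0 := by
    have hcross := sideOf_mul_sub_sideOf Q P A B C D
    have hA' := mul_nonpos_of_nonneg_of_nonpos hBpos.le (hbelow A (Finset.mem_union_left _ hA))
    have hB' := mul_nonneg_of_nonpos_of_nonpos hAneg.le (hbelow B (Finset.mem_union_right _ hB))
    have hAB' := mul_neg_of_neg_of_pos hAB (sub_pos.2 (hCneg.trans hDpos))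
    exact neg_of_mul_neg_left (by linarith) (sub_pos.2 (hAneg.trans hBpos)).le
  have hPneg : sideOf C D P < 0 := by
    have : sideOf C D P = sideOf C D Q - (sideOf Q P D - sideOf Q P C) := by
      simp only [sideOf]; ring
    linarith
  refine ⟨C, hC, D, hD, fun X hX hXC hXD => ?_⟩
  have hcases := hX
  rw [← hS.rightSide_union_leftSide_union_pair hQ hP hPQ, Finset.mem_union, Finset.mem_insert,
    Finset.mem_singleton] at hcases
  rcases hcases with hXside | rfl | rfl
  · have hCD : C ≠ D := by rintro rfl; exact hCneg.asymm hDpos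
    exact (hbelow X hXside).lt_of_ne
      (hS.sideOf_ne_zero (mem_rightSide.1 hC).1 (mem_leftSide.1 hD).1 hX hCD hXC hXD)
  · exact hPneg
  · exact hQneg

end Bridge

section Piercing

/-- `S` has a non-crossing perfect matching containing the pair `{P, Q}` and a pair that the segment
`PQ` pierces. -/
def HasMatchingPiercedBy (S : Finset Pt) (P Q : Pt) : Prop :=
  ∃ M C D, IsNCMatching S M ∧ s(P, Q) ∈ M ∧ s(C, D) ∈ M ∧ Pierces P Q C D

variable {S : Finset Pt} {Q P : Pt}

lemma HasMatchingPiercedBy.exists_hasPiercing (h : HasMatchingPiercedBy S P Q)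
    (hP : P ∈ frontier (convexHull ℝ (S : Set Pt))) :
    ∃ M, IsNCMatching S M ∧ HasPiercing S M := by
  obtain ⟨M, C, D, hM, hPQ, hCD, hpierce⟩ := h
  exact ⟨M, hM, P, Q, C, D, hPQ, hCD, hP, hpierce⟩

lemma GeneralPosition.hasMatchingPiercedBy_of_odd (hS : GeneralPosition S) (hQ : Q ∈ S)
    (hP : P ∈ S) (hPQ : P ≠ Q) (hright : Odd (rightSide Q P S).card)
    (hleft : Odd (leftSide Q P S).card)
    (hsegment : ∃ A ∈ rightSide Q P S, ∃ B ∈ leftSide Q P S, sideOf A B Q < 0) :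
    HasMatchingPiercedBy S P Q := by
  obtain ⟨A, hA, B, hB, hAB⟩ := hsegment
  obtain ⟨C, hC, D, hD, hbelow⟩ := hS.exists_bridge hQ hP hPQ hA hB hAB
  obtain ⟨hCS, hCneg⟩ := mem_rightSide.1 hC
  obtain ⟨hDS, hDpos⟩ := mem_leftSide.1 hD
  have hCD : C ≠ D := by rintro rfl; exact hCneg.asymm hDpos
  obtain ⟨hP', hQ'⟩ := mem_sdiff_pair_of_mem_sides hQ hP hC hD
  obtain ⟨M, hM, hPQM⟩ := (hS.mono Finset.sdiff_subset).exists_isNCMatching_mem hQ' hP' hPQ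
    (by rw [rightSide_sdiff_pair hD, Finset.card_erase_of_mem hC]; exact hright.tsub_odd odd_one)
    (by rw [leftSide_sdiff_pair hC, Finset.card_erase_of_mem hD]; exact hleft.tsub_odd odd_one)
  have hPneg := hbelow P hP (by grind) (by grind)
  have hQneg := hbelow Q hQ (by grind) (by grind)
  exact ⟨M ∪ {s(C, D)}, C, D, hM.union_pair hCS hDS hCD hbelow, by simp [hPQM], by simp,
    pierces_of_sideOf hPQ hCneg hDpos hQneg hPneg⟩

lemma GeneralPosition.hasMatchingPiercedBy_of_even (hS : GeneralPosition S) (hQ : Q ∈ S)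
    (hP : P ∈ S) (hPQ : P ≠ Q) (hright : Even (rightSide Q P S).card)
    (hleft : Even (leftSide Q P S).card)
    (hsegment : ∀ C D, ∃ A ∈ rightSide Q P S, A ≠ C ∧ ∃ B ∈ leftSide Q P S, B ≠ D ∧
      sideOf A B Q < 0) :
    HasMatchingPiercedBy S P Q := by
  obtain ⟨A₀, hA₀, -, B₀, hB₀, -, hAB₀⟩ := hsegment P P
  obtain ⟨C, hC, D, hD, hbelow⟩ := hS.exists_bridge hQ hP hPQ hA₀ hB₀ hAB₀
  obtain ⟨hCS, hCneg⟩ := mem_rightSide.1 hC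
  obtain ⟨hDS, hDpos⟩ := mem_leftSide.1 hD
  have hCD : C ≠ D := by rintro rfl; exact hCneg.asymm hDpos
  obtain ⟨hP', hQ'⟩ := mem_sdiff_pair_of_mem_sides hQ hP hC hD
  have hright' := rightSide_sdiff_pair (C := C) hD
  have hleft' := leftSide_sdiff_pair (D := D) hC
  obtain ⟨A, hA, hAC, B, hB, hBD, hAB⟩ := hsegment C D
  obtain ⟨M, C', D', hM, hPQM, hCDM, hpierce⟩ :=
    (hS.mono Finset.sdiff_subset).hasMatchingPiercedBy_of_odd hQ' hP' hPQ
      (by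
        rw [hright', Finset.card_erase_of_mem hC]
        exact Nat.Even.sub_odd (Finset.card_pos.2 ⟨C, hC⟩) hright odd_one)
      (by
        rw [hleft', Finset.card_erase_of_mem hD]
        exact Nat.Even.sub_odd (Finset.card_pos.2 ⟨D, hD⟩) hleft odd_one)
      ⟨A, hright' ▸ Finset.mem_erase.2 ⟨hAC, hA⟩, B, hleft' ▸ Finset.mem_erase.2 ⟨hBD, hB⟩, hAB⟩
  exact ⟨M ∪ {s(C, D)}, C', D', hM.union_pair hCS hDS hCD hbelow, by simp [hPQM], by simp [hCDM],
    hpierce⟩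

end Piercing

section Counting

variable {ι α : Type*} [LinearOrder α] {c : ι → α} {L R : Finset ι}

lemma card_filter_lt_add_one_add_card_filter_gt (hc : Set.InjOn c R) {a : ι} (ha : a ∈ R) :
    (R.filter fun x => c x < c a).card + 1 + (R.filter fun x => c a < c x).card = R.card := by
  have hbelow : (R.erase a).filter (fun x => c x < c a) = R.filter fun x => c x < c a := by
    grind
  have habove : (R.erase a).filter (fun x => ¬c x < c a) = R.filter fun x => c a < c x := by
    ext x
    simp only [Finset.mem_filter, Finset.mem_erase]
    grind [Set.InjOn]
  have hsplit := Finset.card_filter_add_card_filter_not (s := R.erase a) fun x => c x < c a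
  have := Finset.card_erase_add_one ha
  rw [hbelow, habove] at hsplit
  omega

-- From one point of `R` to the next the first count drops by one, so parity forces the second,
-- which is monotone, to grow.
lemma card_filter_lt_le_card_filter_lt_of_even (hc : Set.InjOn c R)
    (heven : ∀ a ∈ R, Even ((R.filter fun x => c a < c x).card +
      (L.filter fun y => c y < c a).card)) {a : ι} (ha : a ∈ R) :
    (R.filter fun x => c x < c a).card ≤ (L.filter fun y => c y < c a).card := by
  induction hm : (R.filter fun x => c x < c a).card generalizing a with
  | zero => exact Nat.zero_le _
  | succ m ih =>
    obtain ⟨b, hb, hbmax⟩ := (R.filter fun x => c x < c a).exists_max_image c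
      (Finset.card_pos.1 (by omega))
    obtain ⟨hbR, hba⟩ := Finset.mem_filter.1 hb
    have hpred : (R.filter fun x => c x < c b) = (R.filter fun x => c x < c a).erase b := by
      ext x
      simp only [Finset.mem_filter, Finset.mem_erase]
      grind [Set.InjOn]
    have hm' : (R.filter fun x => c x < c b).card = m := by
      rw [hpred, Finset.card_erase_of_mem hb, hm, Nat.add_sub_cancel]
    have hmono : (L.filter fun y => c y < c b).card ≤ (L.filter fun y => c y < c a).card :=
      Finset.card_le_card (Finset.monotone_filter_right L fun y _ hy => hy.trans hba)
    have := ih hbR hm'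
    have := Nat.even_iff.1 (heven a ha)
    have := Nat.even_iff.1 (heven b hbR)
    have := card_filter_lt_add_one_add_card_filter_gt hc ha
    have := card_filter_lt_add_one_add_card_filter_gt hc hbR
    omega

lemma exists_ne_lt_of_even (hc : Set.InjOn c R)
    (heven : ∀ a ∈ R, Even ((R.filter fun x => c a < c x).card +
      (L.filter fun y => c y < c a).card)) (hR : 4 ≤ R.card) (x y : ι) :
    ∃ a ∈ R, a ≠ x ∧ ∃ b ∈ L, b ≠ y ∧ c b < c a := by
  have hcard := Finset.pred_card_le_card_erase (s := R) (a := x)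
  obtain ⟨a, ha, hamax⟩ := (R.erase x).exists_max_image c (Finset.card_pos.1 (by omega))
  obtain ⟨hax, haR⟩ := Finset.mem_erase.1 ha
  have hsub : (R.erase x).erase a ⊆ R.filter fun z => c z < c a := by
    intro z hz
    simp only [Finset.mem_filter, Finset.mem_erase] at hz ⊢
    grind [Set.InjOn]
  have hle := Finset.card_le_card hsub
  rw [Finset.card_erase_of_mem ha] at hle
  have hcount := card_filter_lt_le_card_filter_lt_of_even hc heven haR
  obtain ⟨b, hb, hby⟩ := Finset.exists_mem_ne (s := L.filter fun y => c y < c a) (by omega) y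
  obtain ⟨hbL, hba⟩ := Finset.mem_filter.1 hb
  exact ⟨a, haR, hax, b, hbL, hby, hba⟩

end Counting

section Cotangent

/-- The cotangent of the directed angle from the ray `QP` to the ray `QX`. On either open side of
the line `QP` it orders the points by their direction from `Q`. It takes the junk value `0` on the
line `QP` itself. -/
noncomputable def cotAt (Q P X : Pt) : ℝ :=
  ((P.1 - Q.1) * (X.1 - Q.1) + (P.2 - Q.2) * (X.2 - Q.2)) / sideOf Q P X

variable {Q P A X : Pt}

lemma sideOf_mul_sq_add_sq (hA : sideOf Q P A ≠ 0) (hX : sideOf Q P X ≠ 0) :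
    sideOf Q A X * ((P.1 - Q.1) ^ 2 + (P.2 - Q.2) ^ 2) =
      sideOf Q P A * sideOf Q P X * (cotAt Q P A - cotAt Q P X) := by
  unfold cotAt
  field_simp
  simp only [sideOf]
  ring

lemma ne_of_sideOf_ne_zero (hX : sideOf Q P X ≠ 0) : P ≠ Q := by
  rintro rfl
  simp [sideOf] at hX

lemma sideOf_neg_iff_cotAt_lt_of_same_side (h : 0 < sideOf Q P X * sideOf Q P A) :
    sideOf Q A X < 0 ↔ cotAt Q P A < cotAt Q P X := by
  have hX := left_ne_zero_of_mul h.ne'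
  rw [← neg_pos, ← sideOf_swap_right,
    ← mul_pos_iff_of_pos_right (sq_add_sq_sub_pos (ne_of_sideOf_ne_zero hX)),
    sideOf_mul_sq_add_sq hX (right_ne_zero_of_mul h.ne'), mul_pos_iff_of_pos_left h, sub_pos]

lemma sideOf_neg_iff_cotAt_lt_of_opposite_side (h : sideOf Q P X * sideOf Q P A < 0) :
    sideOf Q A X < 0 ↔ cotAt Q P X < cotAt Q P A := by
  have hX := left_ne_zero_of_mul h.ne
  rw [← neg_pos, ← sideOf_swap_right,
    ← mul_pos_iff_of_pos_right (sq_add_sq_sub_pos (ne_of_sideOf_ne_zero hX)),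
    sideOf_mul_sq_add_sq hX (right_ne_zero_of_mul h.ne), ← neg_mul_neg,
    mul_pos_iff_of_pos_left (neg_pos.2 h), neg_sub, sub_pos]

end Cotangent

section InteriorPoint

variable {S : Finset Pt} {Q P A : Pt}

lemma GeneralPosition.injOn_cotAt_rightSide (hS : GeneralPosition S) (hQ : Q ∈ S) :
    Set.InjOn (cotAt Q P) (rightSide Q P S) := by
  intro X hX Y hY hXY
  by_contra hne
  have hX' := mem_rightSide.1 hX
  have hY' := mem_rightSide.1 hY
  have hzero := sideOf_mul_sq_add_sq hX'.2.ne hY'.2.ne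
  rw [hXY, sub_self, mul_zero] at hzero
  have hpos := sq_add_sq_sub_pos (ne_of_sideOf_ne_zero hX'.2.ne)
  exact hS.sideOf_ne_zero hQ hX'.1 hY'.1 (ne_of_mem_rightSide hX).symm (ne_of_mem_rightSide hY)
    (Ne.symm hne) ((mul_eq_zero_iff_right hpos.ne').1 hzero)

lemma GeneralPosition.rightSide_eq_filter_cotAt (hS : GeneralPosition S) (hQ : Q ∈ S) (hP : P ∈ S)
    (hA : A ∈ rightSide Q P S) :
    rightSide Q A S = ((rightSide Q P S).filter fun X => cotAt Q P A < cotAt Q P X) ∪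
      ((leftSide Q P S).filter fun Y => cotAt Q P Y < cotAt Q P A) := by
  have hAneg := (mem_rightSide.1 hA).2
  have hPQ := ne_of_sideOf_ne_zero hAneg.ne
  have hAP : 0 < sideOf Q A P := by rw [sideOf_swap_right]; exact neg_pos.2 hAneg
  ext X
  simp only [Finset.mem_union, Finset.mem_filter, mem_rightSide, mem_leftSide]
  constructor
  · rintro ⟨hX, hXneg⟩
    have hXQ : X ≠ Q := by rintro rfl; exact hXneg.ne (sideOf_self_left _ _)
    have hXP : X ≠ P := by rintro rfl; exact hXneg.asymm hAP
    rcases lt_or_gt_of_ne (hS.sideOf_ne_zero hQ hP hX hPQ.symm hXQ hXP) with hright | hleft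
    · exact .inl ⟨⟨hX, hright⟩, (sideOf_neg_iff_cotAt_lt_of_same_side
        (mul_pos_of_neg_of_neg hright hAneg)).1 hXneg⟩
    · exact .inr ⟨⟨hX, hleft⟩, (sideOf_neg_iff_cotAt_lt_of_opposite_side
        (mul_neg_of_pos_of_neg hleft hAneg)).1 hXneg⟩
  · rintro (⟨⟨hX, hright⟩, hlt⟩ | ⟨⟨hX, hleft⟩, hlt⟩)
    · exact ⟨hX, (sideOf_neg_iff_cotAt_lt_of_same_side
        (mul_pos_of_neg_of_neg hright hAneg)).2 hlt⟩
    · exact ⟨hX, (sideOf_neg_iff_cotAt_lt_of_opposite_side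
        (mul_neg_of_pos_of_neg hleft hAneg)).2 hlt⟩

lemma GeneralPosition.exists_segment_of_mem_interior (hS : GeneralPosition S) (hQ : Q ∈ S)
    (hP : P ∈ S) (hPQ : P ≠ Q) (hint : Q ∈ interior (convexHull ℝ (S : Set Pt))) :
    ∃ A ∈ rightSide Q P S, ∃ B ∈ leftSide Q P S, sideOf A B Q < 0 := by
  obtain ⟨X, hX, hXneg⟩ := exists_sideOf_neg_of_mem_interior hPQ hint
  obtain ⟨A, hA, hAmax⟩ := (rightSide Q P S).exists_max_image (cotAt Q P)
    ⟨X, mem_rightSide.2 ⟨hX, hXneg⟩⟩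
  obtain ⟨B, hB, hBneg⟩ := exists_sideOf_neg_of_mem_interior (ne_of_mem_rightSide hA) hint
  have hBmem : B ∈ rightSide Q A S := mem_rightSide.2 ⟨hB, hBneg⟩
  rw [hS.rightSide_eq_filter_cotAt hQ hP hA, Finset.mem_union, Finset.mem_filter,
    Finset.mem_filter] at hBmem
  rcases hBmem with ⟨hBright, hlt⟩ | ⟨hBleft, -⟩
  · exact absurd (hAmax B hBright) hlt.not_ge
  · exact ⟨A, hA, B, hBleft, by rwa [sideOf_rotate]⟩

lemma GeneralPosition.card_rightSide_pos_and_card_leftSide_pos (hS : GeneralPosition S)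
    (hQ : Q ∈ S) (hP : P ∈ S) (hPQ : P ≠ Q) (hint : Q ∈ interior (convexHull ℝ (S : Set Pt))) :
    0 < (rightSide Q P S).card ∧ 0 < (leftSide Q P S).card := by
  obtain ⟨A, hA, B, hB, -⟩ := hS.exists_segment_of_mem_interior hQ hP hPQ hint
  exact ⟨Finset.card_pos.2 ⟨A, hA⟩, Finset.card_pos.2 ⟨B, hB⟩⟩

lemma GeneralPosition.exists_segment_avoiding_of_even (hS : GeneralPosition S) (hQ : Q ∈ S)
    (hP : P ∈ S) (heven : ∀ A ∈ S, A ≠ Q → Even (rightSide Q A S).card)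
    (hcard : 4 ≤ (rightSide Q P S).card) (C D : Pt) :
    ∃ A ∈ rightSide Q P S, A ≠ C ∧ ∃ B ∈ leftSide Q P S, B ≠ D ∧ sideOf A B Q < 0 := by
  have hparity : ∀ A ∈ rightSide Q P S,
      Even (((rightSide Q P S).filter fun X => cotAt Q P A < cotAt Q P X).card +
        ((leftSide Q P S).filter fun Y => cotAt Q P Y < cotAt Q P A).card) := by
    intro A hA
    rw [← Finset.card_union_of_disjoint
        (Finset.disjoint_filter_filter disjoint_rightSide_leftSide),
      ← hS.rightSide_eq_filter_cotAt hQ hP hA]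
    exact heven A (mem_rightSide.1 hA).1 (ne_of_mem_rightSide hA)
  obtain ⟨A, hA, hAC, B, hB, hBD, hlt⟩ :=
    exists_ne_lt_of_even (hS.injOn_cotAt_rightSide hQ) hparity hcard C D
  refine ⟨A, hA, hAC, B, hB, hBD, ?_⟩
  rw [sideOf_rotate]
  exact (sideOf_neg_iff_cotAt_lt_of_opposite_side
    (mul_neg_of_pos_of_neg (mem_leftSide.1 hB).2 (mem_rightSide.1 hA).2)).2 hlt

end InteriorPoint

/-- If a set `S` of `2k` points in general position has exactly
one point `Q` interior to its convex hull, then `S` has a non-crossing perfect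
matching with the piercing property, unless `k = 3` and `S` has the
exceptional order type. -/
theorem piercing_matching_of_one_interior_point (k : ℕ) (S : Finset Pt)
    (hcard : S.card = 2 * k) (hgp : GeneralPosition S) (Q : Pt) (hQ : Q ∈ S)
    (hint : (↑S ∩ interior (convexHull ℝ (S : Set Pt))) = {Q}) :
    (∃ M : Finset (Sym2 Pt), IsNCMatching S M ∧ HasPiercing S M) ∨
    (k = 3 ∧ ∀ P ∈ S, P ≠ Q →
      (S.filter (fun X => 0 < sideOf Q P X)).card = 2 ∧
      (S.filter (fun X => sideOf Q P X < 0)).card = 2) := by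
  obtain ⟨⟨-, hQint⟩, honly⟩ := Set.eq_singleton_iff_unique_mem.1 hint
  have hfrontier : ∀ P ∈ S, P ≠ Q → P ∈ frontier (convexHull ℝ (S : Set Pt)) :=
    fun P hP hPQ => ⟨subset_closure (subset_convexHull ℝ _ hP), fun h => hPQ (honly P ⟨hP, h⟩)⟩
  have hsegment := fun P hP hPQ => hgp.exists_segment_of_mem_interior (P := P) hQ hP hPQ hQint
  have hpos := fun P hP hPQ =>
    hgp.card_rightSide_pos_and_card_leftSide_pos (P := P) hQ hP hPQ hQint
  have hsum := fun P hP hPQ => hcard ▸ hgp.card_rightSide_add_card_leftSide (P := P) hQ hP hPQ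
  by_cases hodd : ∃ P ∈ S, P ≠ Q ∧ Odd (rightSide Q P S).card
  · obtain ⟨P, hP, hPQ, hright⟩ := hodd
    have hleft : Odd (leftSide Q P S).card := by grind
    exact .inl ((hgp.hasMatchingPiercedBy_of_odd hQ hP hPQ hright hleft
      (hsegment P hP hPQ)).exists_hasPiercing (hfrontier P hP hPQ))
  have hright : ∀ P ∈ S, P ≠ Q → Even (rightSide Q P S).card := by grind
  have hleft : ∀ P ∈ S, P ≠ Q → Even (leftSide Q P S).card := by grind
  rcases eq_or_ne k 3 with rfl | hk
  · exact .inr ⟨rfl, fun P hP hPQ => by grind [rightSide, leftSide]⟩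
  · have hcard_pos := Finset.card_pos.2 ⟨Q, hQ⟩
    obtain ⟨X, hX, hXQ⟩ := Finset.exists_mem_ne (s := S) (by omega) Q
    obtain ⟨P, hP, hPQ, hle⟩ := exists_card_leftSide_le_card_rightSide hX hXQ
    have hfour : 4 ≤ (rightSide Q P S).card := by grind
    exact .inl ((hgp.hasMatchingPiercedBy_of_even hQ hP hPQ (hright P hP hPQ) (hleft P hP hPQ)
      (hgp.exists_segment_avoiding_of_even hQ hP hright hfour)).exists_hasPiercing
      (hfrontier P hP hPQ))
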